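/- arXiv:1606.09141 — 5 statements merged into one kernel-verified Lean document; each statement's English description precedes it below -/
import Mathlib

section
/- Let n ≥ 1. On the open subset of ℝ^{2n} = ℝⁿ × ℝⁿ (coordinates (X,Y)) where U(X,Y) = ‖X‖² − ‖Y‖² ≠ 0, the CH-function F(X,Y) = (1/2)·arctan(V/U), with V(X,Y) = 2⟨X,Y⟩, is infinity-harmonic: Δ_∞F = 0 at every such point. -/
/-!
Put `Q = U² + V²` and `N = ‖z‖²`.  With `∂U = 2 (X, -Y)` and `∂V = 2 (Y, X)`, the gradient of the
CH-function is `∇F = (U · (Y, X) - V · (X, -Y)) / Q` wherever `U ≠ 0` (`pd_CHfun`).  The vectors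
`(Y, X)` and `(X, -Y)` are orthogonal and both have squared norm `N`, so `‖∇F‖² = N / Q`
(`sum_CHgrad_sq`).  The infinity-Laplacian is half the derivative of `‖∇F‖²` in the direction `∇F`,
and it vanishes because both `N` and `Q` are stationary in that direction: `⟨z, ∇F⟩ = 0` since `F`
is homogeneous of degree zero, and `dQ(∇F) = 0` since `½ log Q` and `arg (U + iV)` are the real and
imaginary parts of the holomorphic function `log (∑ (Xₖ + i Yₖ)²)` and hence have orthogonal
gradients.
-/

noncomputable section

variable {ι : Type*} [Fintype ι] [DecidableEq ι]

/-- The `i`-th partial derivative `∂F/∂zᵢ` of `F : ℝ^ι → ℝ` at `x`. -/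
def pd (F : EuclideanSpace ℝ ι → ℝ) (x : EuclideanSpace ℝ ι) (i : ι) : ℝ :=
  fderiv ℝ F x (EuclideanSpace.single i 1)

/-- The Laplacian `ΔF = Σᵢ ∂²F/∂zᵢ²` at `x`. -/
def lap (F : EuclideanSpace ℝ ι → ℝ) (x : EuclideanSpace ℝ ι) : ℝ :=
  ∑ i, fderiv ℝ (fun y => pd F y i) x (EuclideanSpace.single i 1)

/-- The infinity-Laplacian `Δ_∞F = Σ_{i,j} (∂F/∂zᵢ)(∂F/∂zⱼ)(∂²F/∂zᵢ∂zⱼ)` at `x`. -/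
def infLap (F : EuclideanSpace ℝ ι → ℝ) (x : EuclideanSpace ℝ ι) : ℝ :=
  ∑ i, ∑ j, pd F x i * pd F x j * fderiv ℝ (fun y => pd F y i) x (EuclideanSpace.single j 1)

/-- The squared norm `‖∇F‖²` of the gradient of `F` at `x`. -/
def gradSq (F : EuclideanSpace ℝ ι → ℝ) (x : EuclideanSpace ℝ ι) : ℝ :=
  ∑ i, (pd F x i) ^ 2

/-- `U(X,Y) = ‖X‖² - ‖Y‖²` on `ℝ^{2n} = ℝⁿ × ℝⁿ`. -/
def Ufun (n : ℕ) (z : EuclideanSpace ℝ (Fin n ⊕ Fin n)) : ℝ :=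
  ∑ i : Fin n, (z (Sum.inl i)) ^ 2 - ∑ i : Fin n, (z (Sum.inr i)) ^ 2

/-- `V(X,Y) = 2⟨X,Y⟩` on `ℝ^{2n} = ℝⁿ × ℝⁿ`. -/
def Vfun (n : ℕ) (z : EuclideanSpace ℝ (Fin n ⊕ Fin n)) : ℝ :=
  2 * ∑ i : Fin n, z (Sum.inl i) * z (Sum.inr i)

/-- The CH-function `F(X,Y) = (1/2)·arctan(V/U)`. -/
def CHfun (n : ℕ) (z : EuclideanSpace ℝ (Fin n ⊕ Fin n)) : ℝ :=
  (1 / 2) * Real.arctan (Vfun n z / Ufun n z)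

/-- The differential of `Ufun n` at `z`. -/
def dU (n : ℕ) (z : EuclideanSpace ℝ (Fin n ⊕ Fin n)) :
    EuclideanSpace ℝ (Fin n ⊕ Fin n) →L[ℝ] ℝ :=
  ∑ i : Fin n, (2 * z (Sum.inl i)) • EuclideanSpace.proj (Sum.inl i)
    - ∑ i : Fin n, (2 * z (Sum.inr i)) • EuclideanSpace.proj (Sum.inr i)

/-- The differential of `Vfun n` at `z`. -/
def dV (n : ℕ) (z : EuclideanSpace ℝ (Fin n ⊕ Fin n)) :
    EuclideanSpace ℝ (Fin n ⊕ Fin n) →L[ℝ] ℝ :=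
  (2 : ℝ) • ∑ i : Fin n, (z (Sum.inl i) • EuclideanSpace.proj (Sum.inr i)
    + z (Sum.inr i) • EuclideanSpace.proj (Sum.inl i))

/-- The squared Euclidean norm `‖X‖² + ‖Y‖²`. -/
def Nfun (n : ℕ) (z : EuclideanSpace ℝ (Fin n ⊕ Fin n)) : ℝ :=
  ∑ i : Fin n, (z (Sum.inl i)) ^ 2 + ∑ i : Fin n, (z (Sum.inr i)) ^ 2

/-- The differential of `Nfun n` at `z`. -/
def dN (n : ℕ) (z : EuclideanSpace ℝ (Fin n ⊕ Fin n)) :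
    EuclideanSpace ℝ (Fin n ⊕ Fin n) →L[ℝ] ℝ :=
  ∑ i : Fin n, (2 * z (Sum.inl i)) • EuclideanSpace.proj (Sum.inl i)
    + ∑ i : Fin n, (2 * z (Sum.inr i)) • EuclideanSpace.proj (Sum.inr i)

lemma hasFDerivAt_coord {n : ℕ} (z : EuclideanSpace ℝ (Fin n ⊕ Fin n)) (k : Fin n ⊕ Fin n) :
    HasFDerivAt (fun y : EuclideanSpace ℝ (Fin n ⊕ Fin n) => y k)
      (EuclideanSpace.proj k : EuclideanSpace ℝ (Fin n ⊕ Fin n) →L[ℝ] ℝ) z :=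
  (EuclideanSpace.proj k : EuclideanSpace ℝ (Fin n ⊕ Fin n) →L[ℝ] ℝ).hasFDerivAt

lemma hasFDerivAt_sum_sq {n : ℕ} (z : EuclideanSpace ℝ (Fin n ⊕ Fin n))
    (f : Fin n → Fin n ⊕ Fin n) :
    HasFDerivAt (fun y : EuclideanSpace ℝ (Fin n ⊕ Fin n) => ∑ i, (y (f i)) ^ 2)
      (∑ i, (2 * z (f i)) • (EuclideanSpace.proj (f i) :
        EuclideanSpace ℝ (Fin n ⊕ Fin n) →L[ℝ] ℝ)) z := by
  refine HasFDerivAt.fun_sum fun i _ => ?_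
  simpa using (hasFDerivAt_coord z (f i)).pow 2

lemma hasFDerivAt_Ufun (n : ℕ) (z : EuclideanSpace ℝ (Fin n ⊕ Fin n)) :
    HasFDerivAt (Ufun n) (dU n z) z :=
  (hasFDerivAt_sum_sq z Sum.inl).sub (hasFDerivAt_sum_sq z Sum.inr)

lemma hasFDerivAt_Nfun (n : ℕ) (z : EuclideanSpace ℝ (Fin n ⊕ Fin n)) :
    HasFDerivAt (Nfun n) (dN n z) z :=
  (hasFDerivAt_sum_sq z Sum.inl).add (hasFDerivAt_sum_sq z Sum.inr)

lemma hasFDerivAt_Vfun (n : ℕ) (z : EuclideanSpace ℝ (Fin n ⊕ Fin n)) :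
    HasFDerivAt (Vfun n) (dV n z) z :=
  (HasFDerivAt.fun_sum fun i _ =>
    (hasFDerivAt_coord z (Sum.inl i)).mul (hasFDerivAt_coord z (Sum.inr i))).const_mul 2

/-- The squared modulus `U² + V²` of `U + iV = ∑ (Xₖ + i Yₖ)²`. -/
def Qfun (n : ℕ) (z : EuclideanSpace ℝ (Fin n ⊕ Fin n)) : ℝ :=
  Ufun n z ^ 2 + Vfun n z ^ 2

lemma Qfun_ne_zero {n : ℕ} {z : EuclideanSpace ℝ (Fin n ⊕ Fin n)} (hz : Ufun n z ≠ 0) :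
    Qfun n z ≠ 0 := by
  unfold Qfun
  positivity

lemma hasFDerivAt_Qfun (n : ℕ) (z : EuclideanSpace ℝ (Fin n ⊕ Fin n)) :
    HasFDerivAt (Qfun n) ((2 * Ufun n z) • dU n z + (2 * Vfun n z) • dV n z) z := by
  have h := ((hasFDerivAt_Ufun n z).pow 2).add ((hasFDerivAt_Vfun n z).pow 2)
  simp only [Nat.add_one_sub_one, pow_one, nsmul_eq_mul, Nat.cast_ofNat] at h
  exact h

lemma hasFDerivAt_div {E : Type*} [NormedAddCommGroup E] [NormedSpace ℝ E] {f g : E → ℝ}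
    {f' g' : E →L[ℝ] ℝ} {x : E} (hf : HasFDerivAt f f' x) (hg : HasFDerivAt g g' x)
    (hx : g x ≠ 0) :
    HasFDerivAt (fun y => f y / g y) ((1 / g x) • f' - (f x / g x ^ 2) • g') x := by
  have h := hf.mul ((hasDerivAt_inv hx).comp_hasFDerivAt x hg)
  refine (h.congr_fderiv ?_).congr_of_eventuallyEq (Filter.Eventually.of_forall fun y => ?_)
  · ext v
    simp
    ring
  · simp [div_eq_mul_inv]

/-- The explicit gradient `(U · (Y, X) - V · (X, -Y)) / (U² + V²)` of the CH-function. -/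
def CHgrad (n : ℕ) (z : EuclideanSpace ℝ (Fin n ⊕ Fin n)) : Fin n ⊕ Fin n → ℝ
  | Sum.inl i => (Ufun n z * z (Sum.inr i) - Vfun n z * z (Sum.inl i)) / Qfun n z
  | Sum.inr i => (Ufun n z * z (Sum.inl i) + Vfun n z * z (Sum.inr i)) / Qfun n z

lemma pd_CHfun {n : ℕ} {z : EuclideanSpace ℝ (Fin n ⊕ Fin n)} (hz : Ufun n z ≠ 0)
    (k : Fin n ⊕ Fin n) : pd (CHfun n) z k = CHgrad n z k := by
  have hQ := Qfun_ne_zero hz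
  have h := ((hasFDerivAt_div (hasFDerivAt_Vfun n z) (hasFDerivAt_Ufun n z) hz).arctan).const_mul (1 / 2)
  have hF : fderiv ℝ (CHfun n) z = _ := h.fderiv
  rw [pd, hF]
  have h1 : 1 + (Vfun n z / Ufun n z) ^ 2 = Qfun n z / Ufun n z ^ 2 := by
    unfold Qfun; field_simp
  rw [h1]
  rcases k with i | i <;>
  · simp [dU, dV, CHgrad]
    field_simp

lemma differentiableAt_CHgrad {n : ℕ} {z : EuclideanSpace ℝ (Fin n ⊕ Fin n)}
    (hz : Ufun n z ≠ 0) (k : Fin n ⊕ Fin n) :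
    DifferentiableAt ℝ (fun y => CHgrad n y k) z := by
  have hQ := Qfun_ne_zero hz
  have dU' := (hasFDerivAt_Ufun n z).differentiableAt
  have dV' := (hasFDerivAt_Vfun n z).differentiableAt
  have dQ' := (hasFDerivAt_Qfun n z).differentiableAt
  have dc := fun k => (hasFDerivAt_coord z k).differentiableAt
  rcases k with i | i
  · exact (hasFDerivAt_div ((dU'.mul (dc _)).sub (dV'.mul (dc _))).hasFDerivAt
      dQ'.hasFDerivAt hQ).differentiableAt
  · exact (hasFDerivAt_div ((dU'.mul (dc _)).add (dV'.mul (dc _))).hasFDerivAt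
      dQ'.hasFDerivAt hQ).differentiableAt

lemma sum_CHgrad_sq {n : ℕ} {z : EuclideanSpace ℝ (Fin n ⊕ Fin n)} (hz : Ufun n z ≠ 0) :
    ∑ k, CHgrad n z k ^ 2 = Nfun n z / Qfun n z := by
  have hQ := Qfun_ne_zero hz
  have key : ∑ k, CHgrad n z k ^ 2
      = (Ufun n z ^ 2 + Vfun n z ^ 2) * Nfun n z / Qfun n z ^ 2 := by
    rw [Fintype.sum_sum_type, Nfun, ← Finset.sum_add_distrib, ← Finset.sum_add_distrib,
      Finset.mul_sum, Finset.sum_div]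
    refine Finset.sum_congr rfl fun i _ => ?_
    simp only [CHgrad]
    field_simp
    ring
  rw [key, ← Qfun]
  field_simp

/-- The gradient field as a vector of Euclidean space. -/
def CHvec (n : ℕ) (z : EuclideanSpace ℝ (Fin n ⊕ Fin n)) : EuclideanSpace ℝ (Fin n ⊕ Fin n) :=
  WithLp.toLp 2 (CHgrad n z)

/-- `N` is stationary along `∇F`: the Euler relation for `F`, homogeneous of degree zero. -/
lemma dN_CHvec {n : ℕ} (z : EuclideanSpace ℝ (Fin n ⊕ Fin n)) : dN n z (CHvec n z) = 0 := by
  have key : dN n z (CHvec n z)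
      = 2 * (Ufun n z * Vfun n z - Vfun n z * Ufun n z) / Qfun n z := by
    have e : Ufun n z * Vfun n z - Vfun n z * Ufun n z
        = ∑ i : Fin n, (Ufun n z * (2 * (z (Sum.inl i) * z (Sum.inr i)))
          - Vfun n z * (z (Sum.inl i) ^ 2 - z (Sum.inr i) ^ 2)) := by
      rw [Finset.sum_sub_distrib, ← Finset.mul_sum, ← Finset.mul_sum, ← Finset.mul_sum,
        Finset.sum_sub_distrib]
      rfl
    rw [e, Finset.mul_sum, Finset.sum_div]
    simp only [dN, CHvec, CHgrad, add_apply,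
      sum_apply, smul_apply, PiLp.proj_apply,
      smul_eq_mul]
    rw [← Finset.sum_add_distrib]
    refine Finset.sum_congr rfl fun i _ => ?_
    ring
  rw [key]
  ring

/-- Together with `dV_CHvec`, this makes `Q` stationary along `∇F`: `U dU(∇F) + V dV(∇F) = 0`. -/
lemma dU_CHvec {n : ℕ} (z : EuclideanSpace ℝ (Fin n ⊕ Fin n)) :
    dU n z (CHvec n z) = -2 * Vfun n z / Qfun n z * Nfun n z := by
  rw [Nfun, ← Finset.sum_add_distrib, Finset.mul_sum]
  simp only [dU, CHvec, CHgrad, sub_apply,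
    sum_apply, smul_apply, PiLp.proj_apply,
    smul_eq_mul]
  rw [← Finset.sum_sub_distrib]
  refine Finset.sum_congr rfl fun i _ => ?_
  ring

lemma dV_CHvec {n : ℕ} (z : EuclideanSpace ℝ (Fin n ⊕ Fin n)) :
    dV n z (CHvec n z) = 2 * Ufun n z / Qfun n z * Nfun n z := by
  rw [Nfun, ← Finset.sum_add_distrib, Finset.mul_sum]
  simp only [dV, CHvec, CHgrad, add_apply,
    sum_apply, smul_apply, PiLp.proj_apply,
    smul_eq_mul]
  rw [Finset.mul_sum]
  refine Finset.sum_congr rfl fun i _ => ?_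
  ring

/-- Where `U ≠ 0`, the CH-function satisfies `Δ_∞F = ½ d(‖∇F‖²)(∇F)`. -/
lemma infLap_CHfun {n : ℕ} {z : EuclideanSpace ℝ (Fin n ⊕ Fin n)} (hz : Ufun n z ≠ 0) :
    infLap (CHfun n) z
      = 1 / 2 * fderiv ℝ (fun y => ∑ k, CHgrad n y k ^ 2) z (CHvec n z) := by
  have hev : ∀ᶠ y in nhds z, Ufun n y ≠ 0 :=
    (hasFDerivAt_Ufun n z).continuousAt.eventually_ne hz
  have hfd : ∀ k, fderiv ℝ (fun y => pd (CHfun n) y k) z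
      = fderiv ℝ (fun y => CHgrad n y k) z := fun k =>
    Filter.EventuallyEq.fderiv_eq (hev.mono fun y hy => pd_CHfun hy k)
  have hvec : CHvec n z = ∑ k, CHgrad n z k • EuclideanSpace.single k (1 : ℝ) := by
    ext j
    rcases j with j | j <;> simp [CHvec, Pi.single_apply]
  have hsum := HasFDerivAt.fun_sum (u := Finset.univ) fun k (_ : k ∈ Finset.univ) =>
    (differentiableAt_CHgrad hz k).hasFDerivAt.pow 2
  rw [hsum.fderiv, sum_apply, Finset.mul_sum, infLap]
  refine Finset.sum_congr rfl fun i _ => ?_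
  simp only [hfd, pd_CHfun hz]
  rw [hvec]
  simp only [map_sum, map_smul, smul_apply, smul_eq_mul, Finset.mul_sum]
  refine Finset.sum_congr rfl fun j _ => ?_
  simp
  ring

/-- the CH-function is infinity-harmonic where `U ≠ 0`. -/
theorem CH_infinity_harmonic (n : ℕ) (hn : 1 ≤ n)
    (z : EuclideanSpace ℝ (Fin n ⊕ Fin n)) (hz : Ufun n z ≠ 0) :
    infLap (CHfun n) z = 0 := by
  have hev : ∀ᶠ y in nhds z, Ufun n y ≠ 0 :=
    (hasFDerivAt_Ufun n z).continuousAt.eventually_ne hz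
  have hgrad : (fun y => ∑ k, CHgrad n y k ^ 2) =ᶠ[nhds z] fun y => Nfun n y / Qfun n y :=
    hev.mono fun y hy => sum_CHgrad_sq hy
  rw [infLap_CHfun hz, hgrad.fderiv_eq,
    (hasFDerivAt_div (hasFDerivAt_Nfun n z) (hasFDerivAt_Qfun n z) (Qfun_ne_zero hz)).fderiv]
  simp [dN_CHvec, dU_CHvec, dV_CHvec]
  ring
end
end

section
/- Let n ≥ 1. On the open subset of ℝ^{2n} = ℝⁿ × ℝⁿ where U(X,Y) = ‖X‖² − ‖Y‖² ≠ 0, the CH-function F(X,Y) = (1/2)·arctan(V/U), with V(X,Y) = 2⟨X,Y⟩, is harmonic: ΔF = 0 at every such point. -/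
/-!
With `wₖ = xₖ + i yₖ` one has `U + iV = Σₖ wₖ²`, so `F` is locally half the imaginary part of a
branch of `log (Σₖ wₖ²)` up to a constant, and is therefore harmonic in each complex variable `wₖ`
separately. The proof is the real form of this remark. Where `U ≠ 0`,
`∂F/∂xₖ = (U yₖ - V xₖ) / (U² + V²)` and `∂F/∂yₖ = (U xₖ + V yₖ) / (U² + V²)`
(`pd_inl`, `pd_inr`). Differentiating once more, `∂²F/∂xₖ² + ∂²F/∂yₖ² = 0` for each `k`, and the
Laplacian is the sum of these pairs.
-/

noncomputable section

variable {ι : Type*} [Fintype ι] [DecidableEq ι]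

/-- The coordinate functional `z ↦ zⱼ`. -/
def coordCLM (n : ℕ) (j : Fin n ⊕ Fin n) : EuclideanSpace ℝ (Fin n ⊕ Fin n) →L[ℝ] ℝ :=
  EuclideanSpace.proj j

lemma coord_hasFDerivAt (n : ℕ) (j : Fin n ⊕ Fin n) (z : EuclideanSpace ℝ (Fin n ⊕ Fin n)) :
    HasFDerivAt (fun y : EuclideanSpace ℝ (Fin n ⊕ Fin n) => y j) (coordCLM n j) z :=
  (coordCLM n j).hasFDerivAt

lemma coordCLM_single (n : ℕ) (j k : Fin n ⊕ Fin n) :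
    coordCLM n j (EuclideanSpace.single k 1) = if j = k then 1 else 0 := by
  simp [coordCLM]

lemma exists_hasFDerivAt_U (n : ℕ) (z : EuclideanSpace ℝ (Fin n ⊕ Fin n)) :
    ∃ L : EuclideanSpace ℝ (Fin n ⊕ Fin n) →L[ℝ] ℝ, HasFDerivAt (Ufun n) L z ∧
      (∀ i, L (EuclideanSpace.single (Sum.inl i) 1) = 2 * z (Sum.inl i)) ∧
      (∀ i, L (EuclideanSpace.single (Sum.inr i) 1) = -(2 * z (Sum.inr i))) := by
  refine ⟨_, (HasFDerivAt.fun_sum (u := Finset.univ) fun i _ =>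
      (coord_hasFDerivAt n (Sum.inl i) z).pow 2).sub
    (HasFDerivAt.fun_sum (u := Finset.univ) fun i _ =>
      (coord_hasFDerivAt n (Sum.inr i) z).pow 2), ?_, ?_⟩ <;> intro i <;>
    simp [coordCLM_single]

lemma exists_hasFDerivAt_V (n : ℕ) (z : EuclideanSpace ℝ (Fin n ⊕ Fin n)) :
    ∃ L : EuclideanSpace ℝ (Fin n ⊕ Fin n) →L[ℝ] ℝ, HasFDerivAt (Vfun n) L z ∧
      (∀ i, L (EuclideanSpace.single (Sum.inl i) 1) = 2 * z (Sum.inr i)) ∧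
      (∀ i, L (EuclideanSpace.single (Sum.inr i) 1) = 2 * z (Sum.inl i)) := by
  refine ⟨_, (HasFDerivAt.fun_sum (u := Finset.univ) fun i _ =>
      (coord_hasFDerivAt n (Sum.inl i) z).mul (coord_hasFDerivAt n (Sum.inr i) z)).const_mul 2,
    ?_, ?_⟩ <;> intro i <;>
    simp [coordCLM_single]

lemma quotient_rule {E : Type*} [NormedAddCommGroup E] [NormedSpace ℝ E] {f g : E → ℝ}
    {f' g' : E →L[ℝ] ℝ} {x : E} (hf : HasFDerivAt f f' x) (hg : HasFDerivAt g g' x)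
    (hx : g x ≠ 0) :
    HasFDerivAt (fun y => f y / g y) ((g x ^ 2)⁻¹ • (g x • f' - f x • g')) x := by
  have h := hf.fun_mul ((hasDerivAt_inv hx).comp_hasFDerivAt x hg)
  simp only [Function.comp_apply, ← div_eq_mul_inv] at h
  refine h.congr_fderiv ?_
  ext v
  simp
  field_simp
  ring

lemma fderiv_CH (n : ℕ) {z : EuclideanSpace ℝ (Fin n ⊕ Fin n)} (hz : Ufun n z ≠ 0)
    {L M : EuclideanSpace ℝ (Fin n ⊕ Fin n) →L[ℝ] ℝ}
    (hL : HasFDerivAt (Ufun n) L z) (hM : HasFDerivAt (Vfun n) M z)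
    (v : EuclideanSpace ℝ (Fin n ⊕ Fin n)) :
    fderiv ℝ (CHfun n) z v =
      (Ufun n z * M v - Vfun n z * L v) / (2 * (Ufun n z ^ 2 + Vfun n z ^ 2)) := by
  have h := ((quotient_rule hM hL hz).arctan).const_mul (1 / 2)
  have hF : fderiv ℝ (CHfun n) z = _ := h.fderiv
  have hR : Ufun n z ^ 2 + Vfun n z ^ 2 ≠ 0 := by positivity
  have hR' : 1 + (Vfun n z / Ufun n z) ^ 2 ≠ 0 := by positivity
  rw [hF]
  simp
  field_simp

lemma pd_inl (n : ℕ) {z : EuclideanSpace ℝ (Fin n ⊕ Fin n)} (hz : Ufun n z ≠ 0) (i : Fin n) :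
    pd (CHfun n) z (Sum.inl i) =
      (Ufun n z * z (Sum.inr i) - Vfun n z * z (Sum.inl i)) /
        (Ufun n z ^ 2 + Vfun n z ^ 2) := by
  obtain ⟨L, hL, hL1, -⟩ := exists_hasFDerivAt_U n z
  obtain ⟨M, hM, hM1, -⟩ := exists_hasFDerivAt_V n z
  have hR : Ufun n z ^ 2 + Vfun n z ^ 2 ≠ 0 := by positivity
  rw [pd, fderiv_CH n hz hL hM, hL1, hM1]
  field_simp

lemma pd_inr (n : ℕ) {z : EuclideanSpace ℝ (Fin n ⊕ Fin n)} (hz : Ufun n z ≠ 0) (i : Fin n) :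
    pd (CHfun n) z (Sum.inr i) =
      (Ufun n z * z (Sum.inl i) + Vfun n z * z (Sum.inr i)) /
        (Ufun n z ^ 2 + Vfun n z ^ 2) := by
  obtain ⟨L, hL, -, hL2⟩ := exists_hasFDerivAt_U n z
  obtain ⟨M, hM, -, hM2⟩ := exists_hasFDerivAt_V n z
  have hR : Ufun n z ^ 2 + Vfun n z ^ 2 ≠ 0 := by positivity
  rw [pd, fderiv_CH n hz hL hM, hL2, hM2]
  field_simp
  ring

/-- The CH-function is harmonic in each pair of variables `(xᵢ, yᵢ)` separately. -/
lemma pair_harmonic (n : ℕ) {z : EuclideanSpace ℝ (Fin n ⊕ Fin n)} (hz : Ufun n z ≠ 0)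
    (i : Fin n) :
    fderiv ℝ (fun y => pd (CHfun n) y (Sum.inl i)) z (EuclideanSpace.single (Sum.inl i) 1) +
      fderiv ℝ (fun y => pd (CHfun n) y (Sum.inr i)) z (EuclideanSpace.single (Sum.inr i) 1)
      = 0 := by
  obtain ⟨L, hL, hL1, hL2⟩ := exists_hasFDerivAt_U n z
  obtain ⟨M, hM, hM1, hM2⟩ := exists_hasFDerivAt_V n z
  have hR : Ufun n z ^ 2 + Vfun n z ^ 2 ≠ 0 := by positivity
  -- The formulas for the first derivatives hold on a whole neighbourhood of `z`,
  -- so they may be differentiated.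
  have hnear : ∀ᶠ y in nhds z, Ufun n y ≠ 0 := hL.continuousAt.eventually_ne hz
  have e1 : (fun y => pd (CHfun n) y (Sum.inl i)) =ᶠ[nhds z] _ :=
    hnear.mono fun y hy => pd_inl n hy i
  have e2 : (fun y => pd (CHfun n) y (Sum.inr i)) =ᶠ[nhds z] _ :=
    hnear.mono fun y hy => pd_inr n hy i
  have hx := coord_hasFDerivAt n (Sum.inl i) z
  have hy := coord_hasFDerivAt n (Sum.inr i) z
  have hden := (hL.pow 2).fun_add (hM.pow 2)
  have d1 := quotient_rule ((hL.fun_mul hy).fun_sub (hM.fun_mul hx)) hden hR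
  have d2 := quotient_rule ((hL.fun_mul hx).fun_add (hM.fun_mul hy)) hden hR
  rw [e1.fderiv_eq, e2.fderiv_eq, d1.fderiv, d2.fderiv]
  simp [coordCLM_single, hL1, hL2, hM1, hM2]
  field_simp
  ring

/-- the CH-function is harmonic where `U ≠ 0`. -/
theorem CH_harmonic (n : ℕ) (hn : 1 ≤ n)
    (z : EuclideanSpace ℝ (Fin n ⊕ Fin n)) (hz : Ufun n z ≠ 0) :
    lap (CHfun n) z = 0 := by
  rw [lap, Fintype.sum_sum_type, ← Finset.sum_add_distrib]
  exact Finset.sum_eq_zero fun i _ => pair_harmonic n hz i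
end
end

section
/- Lawson's algebraic minimal cones in ℝ⁴: let N ≥ 1 be an integer, and let P_N(x₁,y₁,x₂,y₂) = Im((x₁ + i·y₁)^N · (x₂ − i·y₂)), a homogeneous polynomial of degree N+1. Then at every point of the cone {P_N = 0} where ∇P_N ≠ 0, one has ‖∇P_N‖²·ΔP_N − Δ_∞P_N = 0; hence {P_N = 0} is an algebraic minimal cone of degree N+1 in ℝ⁴. -/
/-!
Put `w = x₁ + i·y₁` and `u = x₂ − i·y₂`, so that `P_N = Im f` with `f(w, u) = w ^ N * u`
holomorphic on `ℂ²`. Hence `P_N` is harmonic and only `Δ_∞ P_N = 0` is at stake. In the complex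
coordinates `(w, u)` the gradient of `Im f` is `(i·conj f_w, i·conj f_u)`, so
`Δ_∞ P_N = -Im (f_ww (conj f_w)² + 2 f_wu conj f_w conj f_u)`. Each of the two terms is a real
multiple of `conj f`: altogether
`Δ_∞ P_N = (N³(N-1)|w|^(2N-4)|u|² + 2N²|w|^(2N-2)) · P_N`, which vanishes on `{P_N = 0}`.

The lemmas `pd_LawsonP` and `fderiv_pd_LawsonP` compute the first and second partial derivatives
as imaginary parts of the complex derivatives of `f`.
-/

noncomputable section

variable {ι : Type*} [Fintype ι] [DecidableEq ι]

/-- `P_N(x₁,y₁,x₂,y₂) = Im((x₁ + i·y₁)^N · (x₂ − i·y₂))`, with coordinates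
`(x₁,y₁,x₂,y₂) = (z 0, z 1, z 2, z 3)` on `ℝ⁴`. -/
def LawsonP (N : ℕ) (z : EuclideanSpace ℝ (Fin 4)) : ℝ :=
  ((((z 0 : ℂ) + (z 1 : ℂ) * Complex.I) ^ N) *
    ((z 2 : ℂ) - (z 3 : ℂ) * Complex.I)).im

/-- The complex coordinate `w = x₁ + i·y₁`, as a real-linear map. -/
def coordW : EuclideanSpace ℝ (Fin 4) →L[ℝ] ℂ :=
  (EuclideanSpace.proj 0).smulRight (1 : ℂ) + (EuclideanSpace.proj 1).smulRight Complex.I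

/-- The complex coordinate `u = x₂ − i·y₂`, as a real-linear map. -/
def coordU : EuclideanSpace ℝ (Fin 4) →L[ℝ] ℂ :=
  (EuclideanSpace.proj 2).smulRight (1 : ℂ) - (EuclideanSpace.proj 3).smulRight Complex.I

lemma coordW_apply (z : EuclideanSpace ℝ (Fin 4)) :
    coordW z = (z 0 : ℂ) + (z 1 : ℂ) * Complex.I := by
  simp [coordW]

lemma coordU_apply (z : EuclideanSpace ℝ (Fin 4)) :
    coordU z = (z 2 : ℂ) - (z 3 : ℂ) * Complex.I := by
  simp [coordU]

lemma LawsonP_eq (N : ℕ) :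
    LawsonP N = fun z => (coordW z ^ N * coordU z).im := by
  funext z
  rw [LawsonP, coordW_apply, coordU_apply]

/-- The directional derivative of the imaginary part of a complex-valued map. -/
lemma fderiv_im_apply {h : EuclideanSpace ℝ (Fin 4) → ℂ}
    {h' : EuclideanSpace ℝ (Fin 4) →L[ℝ] ℂ} {z : EuclideanSpace ℝ (Fin 4)}
    (hh : HasFDerivAt h h' z) (v : EuclideanSpace ℝ (Fin 4)) :
    fderiv ℝ (fun y => (h y).im) z v = (h' v).im := by
  have := (Complex.imCLM.hasFDerivAt.comp z hh).fderiv
  have e : (fun y => (h y).im) = (Complex.imCLM ∘ h) := rfl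
  rw [e, this]
  simp

lemma pd_LawsonP (n : ℕ) (z : EuclideanSpace ℝ (Fin 4)) (i : Fin 4) :
    pd (LawsonP (n + 1)) z i =
      (coordW z ^ (n + 1) * coordU (EuclideanSpace.single i 1) +
        (n + 1) * coordW z ^ n * coordU z * coordW (EuclideanSpace.single i 1)).im := by
  rw [pd, LawsonP_eq]
  refine (fderiv_im_apply
    ((coordW.hasFDerivAt.pow (n + 1)).mul coordU.hasFDerivAt) _).trans ?_
  congr 1
  simp
  ring

lemma fderiv_pd_LawsonP (n : ℕ) (z : EuclideanSpace ℝ (Fin 4)) (i j : Fin 4) :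
    fderiv ℝ (fun y => pd (LawsonP (n + 1)) y i) z (EuclideanSpace.single j 1) =
      ((n + 1) * coordW z ^ n *
          (coordW (EuclideanSpace.single j 1) * coordU (EuclideanSpace.single i 1) +
            coordW (EuclideanSpace.single i 1) * coordU (EuclideanSpace.single j 1)) +
        (n + 1) * n * coordW z ^ (n - 1) * coordU z *
          coordW (EuclideanSpace.single i 1) * coordW (EuclideanSpace.single j 1)).im := by
  simp_rw [pd_LawsonP]
  refine (fderiv_im_apply
    (((coordW.hasFDerivAt.pow (n + 1)).mul_const (coordU (EuclideanSpace.single i 1))).add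
      ((((coordW.hasFDerivAt.pow n).const_mul ((n : ℂ) + 1)).mul
        coordU.hasFDerivAt).mul_const (coordW (EuclideanSpace.single i 1)))) _).trans ?_
  congr 1
  simp
  ring

/-- Lawson's algebraic minimal cones of degree `N+1` in `ℝ⁴`: at every point
of `{P_N = 0}` with `∇P_N ≠ 0`, one has `‖∇P_N‖²·ΔP_N − Δ_∞P_N = 0`, so `{P_N = 0}` is an
algebraic minimal cone of degree `N+1`. -/
theorem lawson_cone_R4_minimal (N : ℕ) (hN : 1 ≤ N) (z : EuclideanSpace ℝ (Fin 4))
    (hz : LawsonP N z = 0) (hgrad : ∃ i, pd (LawsonP N) z i ≠ 0) :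
    gradSq (LawsonP N) z * lap (LawsonP N) z - infLap (LawsonP N) z = 0 := by
  obtain ⟨n, rfl⟩ : ∃ n, N = n + 1 := ⟨N - 1, by omega⟩
  have w0 : coordW (EuclideanSpace.single 0 1) = 1 := by simp [coordW_apply]
  have w1 : coordW (EuclideanSpace.single 1 1) = Complex.I := by simp [coordW_apply]
  have w2 : coordW (EuclideanSpace.single 2 1) = 0 := by simp [coordW_apply]
  have w3 : coordW (EuclideanSpace.single 3 1) = 0 := by simp [coordW_apply]
  have u0 : coordU (EuclideanSpace.single 0 1) = 0 := by simp [coordU_apply]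
  have u1 : coordU (EuclideanSpace.single 1 1) = 0 := by simp [coordU_apply]
  have u2 : coordU (EuclideanSpace.single 2 1) = 1 := by simp [coordU_apply]
  have u3 : coordU (EuclideanSpace.single 3 1) = -Complex.I := by simp [coordU_apply]
  simp only [LawsonP_eq] at hz
  simp only [gradSq, lap, infLap, Fin.sum_univ_four, fderiv_pd_LawsonP]
  simp only [pd_LawsonP, w0, w1, w2, w3, u0, u1, u2, u3]
  generalize coordW z = w at *
  generalize coordU z = u at *
  -- `w ^ (n - 1)` carries the coefficient `n`, so the truncated case `n = 0` is treated apart.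
  rcases n with _ | m
  · simp at hz ⊢
    linear_combination (-2) * hz
  · simp only [Nat.add_sub_cancel, pow_succ] at hz ⊢
    generalize w ^ m = a at *
    simp at hz ⊢
    -- The factor is `N³(N-1)|w|^(2N-4)|u|² + 2N²|w|^(2N-2)` with `N = m + 2` and `a = w ^ m`.
    linear_combination (-(((m : ℝ) + 2) ^ 3 * (m + 1) * (a.re ^ 2 + a.im ^ 2) *
      (u.re ^ 2 + u.im ^ 2) + 2 * ((m : ℝ) + 2) ^ 2 * (a.re ^ 2 + a.im ^ 2) *
      (w.re ^ 2 + w.im ^ 2))) * hz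
end
end

section
/- Lawson's minimal cubic cone: the cubic polynomial P(x₁,y₁,x₂,y₂) = y₂·(x₁² − y₁²) − x₂·(2x₁y₁) on ℝ⁴ satisfies ‖∇P‖²·ΔP − Δ_∞P = 0 at every point of its zero set {P = 0} where ∇P ≠ 0; hence {y₂(x₁² − y₁²) − x₂(2x₁y₁) = 0} is a minimal cubic cone in ℝ⁴. -/
/-!
Write `(a, b, c, d)` for the coordinates of `z`. The cubic `P = d (a² - b²) - 2 a b c` has gradient
`(2 (a d - b c), -2 (b d + a c), -2 a b, a² - b²)` and its Hessian has diagonal `(2 d, -2 d, 0, 0)`,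
so `P` is harmonic. Expanding gives the polynomial identity `Δ_∞ P = 8 ‖z‖² P`, so both terms of
`‖∇P‖² ΔP - Δ_∞ P` vanish on `{P = 0}`.
-/

noncomputable section

variable {ι : Type*} [Fintype ι] [DecidableEq ι]

/-- The differential of Lawson's cubic, in coordinates. -/
lemma fderiv_lawson (w v : EuclideanSpace ℝ (Fin 4)) :
    fderiv ℝ (fun w : EuclideanSpace ℝ (Fin 4) =>
      w 3 * ((w 0) ^ 2 - (w 1) ^ 2) - w 2 * (2 * w 0 * w 1)) w v =
    (2 * w 0 * w 3 - 2 * w 1 * w 2) * v 0 + (-2 * w 1 * w 3 - 2 * w 0 * w 2) * v 1 +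
      (-2 * w 0 * w 1) * v 2 + ((w 0) ^ 2 - (w 1) ^ 2) * v 3 := by
  have hc (i : Fin 4) : HasFDerivAt (fun w : EuclideanSpace ℝ (Fin 4) => w i)
      (EuclideanSpace.proj i : EuclideanSpace ℝ (Fin 4) →L[ℝ] ℝ) w :=
    (EuclideanSpace.proj i : EuclideanSpace ℝ (Fin 4) →L[ℝ] ℝ).hasFDerivAt
  simp only [pow_two]
  rw [(((hc 3).fun_mul (((hc 0).fun_mul (hc 0)).fun_sub ((hc 1).fun_mul (hc 1)))).fun_sub
    ((hc 2).fun_mul (((hc 0).const_mul 2).fun_mul (hc 1)))).fderiv]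
  simp
  ring

/-- The differential of a quadratic form `α x y + β u v` in the coordinates; every first partial
derivative of Lawson's cubic has this shape. -/
lemma fderiv_quadratic (α β : ℝ) (i j k l : Fin 4) (w v : EuclideanSpace ℝ (Fin 4)) :
    fderiv ℝ (fun w : EuclideanSpace ℝ (Fin 4) => α * (w i * w j) + β * (w k * w l)) w v =
    α * (w i * v j + w j * v i) + β * (w k * v l + w l * v k) := by
  have hc (i : Fin 4) : HasFDerivAt (fun w : EuclideanSpace ℝ (Fin 4) => w i)
      (EuclideanSpace.proj i : EuclideanSpace ℝ (Fin 4) →L[ℝ] ℝ) w :=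
    (EuclideanSpace.proj i : EuclideanSpace ℝ (Fin 4) →L[ℝ] ℝ).hasFDerivAt
  rw [((((hc i).fun_mul (hc j)).const_mul α).fun_add
    (((hc k).fun_mul (hc l)).const_mul β)).fderiv]
  simp
  ring

/-- Lawson's minimal cubic cone: with coordinates
`(x₁,y₁,x₂,y₂) = (z 0, z 1, z 2, z 3)` on `ℝ⁴`, the cubic
`P = y₂·(x₁² − y₁²) − x₂·(2x₁y₁)` satisfies `‖∇P‖²·ΔP − Δ_∞P = 0` at every point of
`{P = 0}` with `∇P ≠ 0`; hence `{P = 0}` is a minimal cubic cone in `ℝ⁴`. -/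
theorem lawson_cubic_cone_minimal (z : EuclideanSpace ℝ (Fin 4))
    (hz : z 3 * ((z 0) ^ 2 - (z 1) ^ 2) - z 2 * (2 * z 0 * z 1) = 0)
    (hgrad : ∃ i, pd (fun w : EuclideanSpace ℝ (Fin 4) =>
      w 3 * ((w 0) ^ 2 - (w 1) ^ 2) - w 2 * (2 * w 0 * w 1)) z i ≠ 0) :
    gradSq (fun w : EuclideanSpace ℝ (Fin 4) =>
        w 3 * ((w 0) ^ 2 - (w 1) ^ 2) - w 2 * (2 * w 0 * w 1)) z *
      lap (fun w : EuclideanSpace ℝ (Fin 4) =>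
        w 3 * ((w 0) ^ 2 - (w 1) ^ 2) - w 2 * (2 * w 0 * w 1)) z -
      infLap (fun w : EuclideanSpace ℝ (Fin 4) =>
        w 3 * ((w 0) ^ 2 - (w 1) ^ 2) - w 2 * (2 * w 0 * w 1)) z = 0 := by
  set P : EuclideanSpace ℝ (Fin 4) → ℝ := fun w =>
    w 3 * ((w 0) ^ 2 - (w 1) ^ 2) - w 2 * (2 * w 0 * w 1) with hP
  have h0 (w) : pd P w 0 = 2 * (w 0 * w 3) + (-2) * (w 1 * w 2) := by
    rw [pd, hP, fderiv_lawson]; simp; ring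
  have h1 (w) : pd P w 1 = (-2) * (w 1 * w 3) + (-2) * (w 0 * w 2) := by
    rw [pd, hP, fderiv_lawson]; simp; ring
  have h2 (w) : pd P w 2 = (-2) * (w 0 * w 1) + 0 * (w 0 * w 0) := by
    rw [pd, hP, fderiv_lawson]; simp; ring
  have h3 (w) : pd P w 3 = 1 * (w 0 * w 0) + (-1) * (w 1 * w 1) := by
    rw [pd, hP, fderiv_lawson]; simp; ring
  have hlap : lap P z = 0 := by
    simp only [lap, Fin.sum_univ_four, h0, h1, h2, h3, fderiv_quadratic]
    simp
  have hinf : infLap P z = 8 * ((z 0) ^ 2 + (z 1) ^ 2 + (z 2) ^ 2 + (z 3) ^ 2) * P z := by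
    simp only [infLap, Fin.sum_univ_four, h0, h1, h2, h3, fderiv_quadratic]
    simp [hP]
    ring
  have hPz : P z = 0 := hz
  rw [hlap, hinf, hPz]
  ring
end
end

section
/- Tkachev's cubic cone: let n ≥ 1, and on ℝ^{2n+2} (coordinates x₁,y₁,…,x_{n+1},y_{n+1}) set T₁ = Σⱼ(xⱼ² − yⱼ²) and T₂ = Σⱼ 2xⱼyⱼ (sums over j = 1,…,n). The cubic polynomial Q = y_{n+1}·T₁ − x_{n+1}·T₂ satisfies ‖∇Q‖²·ΔQ − Δ_∞Q = 0 at every point of {Q = 0} where ∇Q ≠ 0; hence the cubic cone {y_{n+1}·T₁ = x_{n+1}·T₂} is a minimal hypersurface in ℝ^{2n+2}. -/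
/-!
Write `a = x_{n+1}`, `b = y_{n+1}`, so that `Q = b T₁ - a T₂`. The gradient of `Q` is
`∂Q/∂xⱼ = 2(b xⱼ - a yⱼ)`, `∂Q/∂yⱼ = -2(b yⱼ + a xⱼ)`, `∂Q/∂a = -T₂`, `∂Q/∂b = T₁`.
Two polynomial identities then hold on the whole space: `ΔQ = 0` (`tk_lap`) and
`Δ_∞Q = 8 ‖z‖² Q` (`tk_infLap`). In the second, the Hessian block of the variables `xⱼ, yⱼ`
contributes `8 (a² + b²) Q`, and the mixed entries with `a, b` contribute
`8 Σⱼ (xⱼ² + yⱼ²) (b T₁ - a T₂)`. On `{Q = 0}` both `ΔQ` and `Δ_∞Q` vanish, which is the claim.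

In the lemmas `tk_pd_*` (gradient) and `tk_hess_*` (rows of the Hessian, applied to a vector `v`) the
suffixes `x`, `y` refer to `xⱼ`, `yⱼ` with `j ≤ n`, and `a`, `b` to the last pair of coordinates.
-/

noncomputable section

variable {ι : Type*} [Fintype ι] [DecidableEq ι]

/-- `T₁ = Σ_{j=1}^{n} (xⱼ² − yⱼ²)` on `ℝ^{2n+2}`, with `xⱼ = z (inl j)`, `yⱼ = z (inr j)`. -/
def T1 (n : ℕ) (z : EuclideanSpace ℝ (Fin (n + 1) ⊕ Fin (n + 1))) : ℝ :=
  ∑ j : Fin n, ((z (Sum.inl j.castSucc)) ^ 2 - (z (Sum.inr j.castSucc)) ^ 2)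

/-- `T₂ = Σ_{j=1}^{n} 2xⱼyⱼ` on `ℝ^{2n+2}`. -/
def T2 (n : ℕ) (z : EuclideanSpace ℝ (Fin (n + 1) ⊕ Fin (n + 1))) : ℝ :=
  ∑ j : Fin n, 2 * z (Sum.inl j.castSucc) * z (Sum.inr j.castSucc)

/-- Tkachev's cubic `Q = y_{n+1}·T₁ − x_{n+1}·T₂`. -/
def TkachevQ (n : ℕ) (z : EuclideanSpace ℝ (Fin (n + 1) ⊕ Fin (n + 1))) : ℝ :=
  z (Sum.inr (Fin.last n)) * T1 n z - z (Sum.inl (Fin.last n)) * T2 n z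

open Finset

/-- The ambient space `ℝ^{2n+2}`. -/
abbrev TkSpace (n : ℕ) := EuclideanSpace ℝ (Fin (n + 1) ⊕ Fin (n + 1))

lemma tk_hasFDerivAt_coord {n : ℕ} (z : TkSpace n) (i : Fin (n + 1) ⊕ Fin (n + 1)) :
    HasFDerivAt (fun w : TkSpace n => w i) (EuclideanSpace.proj (𝕜 := ℝ) i) z :=
  (EuclideanSpace.proj (𝕜 := ℝ) i : TkSpace n →L[ℝ] ℝ).hasFDerivAt

lemma tk_differentiable_T1 (n : ℕ) : Differentiable ℝ (T1 n) := by
  unfold T1; fun_prop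

lemma tk_differentiable_T2 (n : ℕ) : Differentiable ℝ (T2 n) := by
  unfold T2; fun_prop

lemma tk_fderiv_T1 (n : ℕ) (z v : TkSpace n) :
    fderiv ℝ (T1 n) z v = ∑ j : Fin n, (2 * z (Sum.inl j.castSucc) * v (Sum.inl j.castSucc)
      - 2 * z (Sum.inr j.castSucc) * v (Sum.inr j.castSucc)) := by
  have h : HasFDerivAt (T1 n) _ z := HasFDerivAt.fun_sum (u := univ) fun j _ =>
    ((tk_hasFDerivAt_coord z (Sum.inl (Fin.castSucc j))).pow 2).sub
      ((tk_hasFDerivAt_coord z (Sum.inr (Fin.castSucc j))).pow 2)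
  rw [h.fderiv]
  simp

lemma tk_fderiv_T2 (n : ℕ) (z v : TkSpace n) :
    fderiv ℝ (T2 n) z v = ∑ j : Fin n, (2 * z (Sum.inl j.castSucc) * v (Sum.inr j.castSucc)
      + 2 * z (Sum.inr j.castSucc) * v (Sum.inl j.castSucc)) := by
  have h : HasFDerivAt (T2 n) _ z := HasFDerivAt.fun_sum (u := univ) fun j _ =>
    ((tk_hasFDerivAt_coord z (Sum.inl (Fin.castSucc j))).const_mul 2).mul
      (tk_hasFDerivAt_coord z (Sum.inr (Fin.castSucc j)))
  rw [h.fderiv]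
  simp
  refine sum_congr rfl fun j _ => ?_
  ring

/-- Product rule for `Q`, leaving the derivatives of `T₁` and `T₂` unevaluated. -/
lemma tk_fderiv_Q (n : ℕ) (z v : TkSpace n) :
    fderiv ℝ (TkachevQ n) z v =
      z (Sum.inr (Fin.last n)) * fderiv ℝ (T1 n) z v + T1 n z * v (Sum.inr (Fin.last n))
      - (z (Sum.inl (Fin.last n)) * fderiv ℝ (T2 n) z v
        + T2 n z * v (Sum.inl (Fin.last n))) := by
  have h : HasFDerivAt (TkachevQ n) _ z :=
    ((tk_hasFDerivAt_coord z (Sum.inr (Fin.last n))).mul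
      (tk_differentiable_T1 n z).hasFDerivAt).sub
    ((tk_hasFDerivAt_coord z (Sum.inl (Fin.last n))).mul
      (tk_differentiable_T2 n z).hasFDerivAt)
  rw [h.fderiv]
  simp

lemma tk_pd_x (n : ℕ) (z : TkSpace n) (j : Fin n) :
    pd (TkachevQ n) z (Sum.inl j.castSucc) =
      2 * (z (Sum.inr (Fin.last n)) * z (Sum.inl j.castSucc)
        - z (Sum.inl (Fin.last n)) * z (Sum.inr j.castSucc)) := by
  simp [pd, tk_fderiv_Q, tk_fderiv_T1, tk_fderiv_T2]
  ring

lemma tk_pd_y (n : ℕ) (z : TkSpace n) (j : Fin n) :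
    pd (TkachevQ n) z (Sum.inr j.castSucc) =
      -2 * (z (Sum.inr (Fin.last n)) * z (Sum.inr j.castSucc)
        + z (Sum.inl (Fin.last n)) * z (Sum.inl j.castSucc)) := by
  simp [pd, tk_fderiv_Q, tk_fderiv_T1, tk_fderiv_T2]
  ring

lemma tk_pd_a (n : ℕ) (z : TkSpace n) :
    pd (TkachevQ n) z (Sum.inl (Fin.last n)) = - T2 n z := by
  simp [pd, tk_fderiv_Q, tk_fderiv_T1, tk_fderiv_T2]

lemma tk_pd_b (n : ℕ) (z : TkSpace n) :
    pd (TkachevQ n) z (Sum.inr (Fin.last n)) = T1 n z := by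
  simp [pd, tk_fderiv_Q, tk_fderiv_T1, tk_fderiv_T2]

lemma tk_hess_x (n : ℕ) (z v : TkSpace n) (j : Fin n) :
    fderiv ℝ (fun w => pd (TkachevQ n) w (Sum.inl j.castSucc)) z v =
      2 * (z (Sum.inr (Fin.last n)) * v (Sum.inl j.castSucc)
        + z (Sum.inl j.castSucc) * v (Sum.inr (Fin.last n))
        - (z (Sum.inl (Fin.last n)) * v (Sum.inr j.castSucc)
        + z (Sum.inr j.castSucc) * v (Sum.inl (Fin.last n)))) := by
  simp only [tk_pd_x]
  rw [((((tk_hasFDerivAt_coord z (Sum.inr (Fin.last n))).fun_mul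
    (tk_hasFDerivAt_coord z (Sum.inl j.castSucc))).fun_sub
    ((tk_hasFDerivAt_coord z (Sum.inl (Fin.last n))).fun_mul
    (tk_hasFDerivAt_coord z (Sum.inr j.castSucc)))).const_mul 2).fderiv]
  simp

lemma tk_hess_y (n : ℕ) (z v : TkSpace n) (j : Fin n) :
    fderiv ℝ (fun w => pd (TkachevQ n) w (Sum.inr j.castSucc)) z v =
      -2 * (z (Sum.inr (Fin.last n)) * v (Sum.inr j.castSucc)
        + z (Sum.inr j.castSucc) * v (Sum.inr (Fin.last n))
        + (z (Sum.inl (Fin.last n)) * v (Sum.inl j.castSucc)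
        + z (Sum.inl j.castSucc) * v (Sum.inl (Fin.last n)))) := by
  simp only [tk_pd_y]
  rw [((((tk_hasFDerivAt_coord z (Sum.inr (Fin.last n))).fun_mul
    (tk_hasFDerivAt_coord z (Sum.inr j.castSucc))).fun_add
    ((tk_hasFDerivAt_coord z (Sum.inl (Fin.last n))).fun_mul
    (tk_hasFDerivAt_coord z (Sum.inl j.castSucc)))).const_mul (-2)).fderiv]
  simp
  ring

lemma tk_hess_a (n : ℕ) (z v : TkSpace n) :
    fderiv ℝ (fun w => pd (TkachevQ n) w (Sum.inl (Fin.last n))) z v =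
      - fderiv ℝ (T2 n) z v := by
  simp only [tk_pd_a]
  rw [fderiv_fun_neg]; rfl

lemma tk_hess_b (n : ℕ) (z v : TkSpace n) :
    fderiv ℝ (fun w => pd (TkachevQ n) w (Sum.inr (Fin.last n))) z v =
      fderiv ℝ (T1 n) z v := by
  simp only [tk_pd_b]

/-- `Q` is harmonic: the only nonzero diagonal Hessian entries are `2y_{n+1}` at `xⱼ` and
`-2y_{n+1}` at `yⱼ`. -/
lemma tk_lap (n : ℕ) (z : TkSpace n) : lap (TkachevQ n) z = 0 := by
  simp only [lap, Fintype.sum_sum_type, Fin.sum_univ_castSucc, tk_hess_x, tk_hess_y, tk_hess_a,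
    tk_hess_b, tk_fderiv_T1, tk_fderiv_T2]
  simp

/-- `Δ_∞F = Σᵢ ∂ᵢF · D(∂ᵢF)(∇F)`: by linearity of the derivative the inner sum is a single
derivative in the direction `∇F`. -/
lemma infLap_eq_sum {ι : Type*} [Fintype ι] [DecidableEq ι] (F : EuclideanSpace ℝ ι → ℝ)
    (x : EuclideanSpace ℝ ι) :
    infLap F x = ∑ i, pd F x i *
      fderiv ℝ (fun y => pd F y i) x (WithLp.toLp 2 (pd F x)) := by
  have hv : (WithLp.toLp 2 (pd F x) : EuclideanSpace ℝ ι) =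
      ∑ j, pd F x j • EuclideanSpace.single j (1 : ℝ) := by
    ext k
    simp [Pi.single_apply]
  simp only [infLap, hv, map_sum, map_smul, smul_eq_mul, mul_sum, mul_assoc]

/-- The identity `Δ_∞Q = 8‖z‖²Q`, valid on all of `ℝ^{2n+2}`. -/
lemma tk_infLap (n : ℕ) (z : TkSpace n) :
    infLap (TkachevQ n) z = 8 * (∑ i, z i ^ 2) * TkachevQ n z := by
  simp only [infLap_eq_sum, Fintype.sum_sum_type, Fin.sum_univ_castSucc, tk_hess_x, tk_hess_y,
    tk_hess_a, tk_hess_b, tk_fderiv_T1, tk_fderiv_T2]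
  simp only [tk_pd_x, tk_pd_y, tk_pd_a, tk_pd_b]
  set a := z (Sum.inl (Fin.last n))
  set b := z (Sum.inr (Fin.last n))
  have hQ : TkachevQ n z = ∑ j : Fin n, (b * (z (Sum.inl j.castSucc) ^ 2
      - z (Sum.inr j.castSucc) ^ 2) - a * (2 * z (Sum.inl j.castSucc) * z (Sum.inr j.castSucc))) := by
    rw [sum_sub_distrib, ← mul_sum, ← mul_sum]; rfl
  -- Against `a² + b²` the factor `Q` is expanded as a sum over `j`; against `Σ (xⱼ² + yⱼ²)` it stays
  -- `b T₁ - a T₂`, so that both sides are sums over `j` of terms that agree identically.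
  have hR : 8 * (∑ j : Fin n, z (Sum.inl j.castSucc) ^ 2 + a ^ 2
        + (∑ j : Fin n, z (Sum.inr j.castSucc) ^ 2 + b ^ 2)) * TkachevQ n z =
      8 * (a ^ 2 + b ^ 2) * (∑ j : Fin n, (b * (z (Sum.inl j.castSucc) ^ 2
      - z (Sum.inr j.castSucc) ^ 2) - a * (2 * z (Sum.inl j.castSucc) * z (Sum.inr j.castSucc))))
      + 8 * (b * T1 n z - a * T2 n z) * (∑ j : Fin n, z (Sum.inl j.castSucc) ^ 2
        + ∑ j : Fin n, z (Sum.inr j.castSucc) ^ 2) := by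
    rw [← hQ, show b * T1 n z - a * T2 n z = TkachevQ n z from rfl]
    ring
  rw [hR]
  simp only [mul_sum, ← sum_add_distrib, ← sum_neg_distrib]
  refine sum_congr rfl fun j _ => ?_
  ring

/-- Tkachev's cubic cone: `Q = y_{n+1}·T₁ − x_{n+1}·T₂` satisfies
`‖∇Q‖²·ΔQ − Δ_∞Q = 0` at every point of `{Q = 0}` with `∇Q ≠ 0`; hence the cubic cone
`{y_{n+1}·T₁ = x_{n+1}·T₂}` is a minimal hypersurface in `ℝ^{2n+2}`. -/
theorem tkachev_cubic_cone_minimal (n : ℕ) (hn : 1 ≤ n)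
    (z : EuclideanSpace ℝ (Fin (n + 1) ⊕ Fin (n + 1)))
    (hz : TkachevQ n z = 0) (hgrad : ∃ i, pd (TkachevQ n) z i ≠ 0) :
    gradSq (TkachevQ n) z * lap (TkachevQ n) z - infLap (TkachevQ n) z = 0 := by
  rw [tk_lap, tk_infLap, hz]
  ring
end
end
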